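/- arXiv:1801.08775 — 3 statements merged into one kernel-verified Lean document; each statement's English description precedes it below -/
import Mathlib

section
/- If f : M → M is a positively expansive continuous map of a compact metric space (M, ρ), then there exist a compatible metric d on M (inducing the same topology as ρ), ξ > 0 and λ > 1 such that whenever d(x,y) < ξ one has d(f(x), f(y)) = λ·d(x,y). -/
open Filter Topology

lemma aux_top {M : Type*} (t t' : TopologicalSpace M) (h1 : @CompactSpace M t) (h2 : @T2Space M t')
    (h : @Continuous M M t t' id) : t' = t := by
  apply le_antisymm _ (continuous_id_iff_le.mp h)
  have hc : @IsClosedMap M M t t' id := @Continuous.isClosedMap M M t t' h1 h2 id h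
  have : @Continuous M M t' t id := by
    refine (@continuous_iff_isClosed M M t' t id).mpr ?_
    intro s hs
    have := hc s hs
    simpa using this
  exact continuous_id_iff_le.mp this

lemma aux_frink {M : Type*} (r : M → M → NNReal) (h0 : ∀ x, r x x = 0)
    (hs : ∀ x y, r x y = r y x)
    (h3 : ∀ x y z w, r x w ≤ 2 * max (r x y) (max (r y z) (r z w))) :
    ∃ D : M → M → ℝ, (∀ x, D x x = 0) ∧ (∀ x y, D x y = D y x) ∧
      (∀ x y z, D x z ≤ D x y + D y z) ∧ (∀ x y, 0 ≤ D x y) ∧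
      (∀ x y, D x y ≤ r x y) ∧ (∀ x y, (r x y : ℝ) ≤ 2 * D x y) := by
  letI P := PseudoMetricSpace.ofPreNNDist r h0 hs
  exact ⟨fun x y => dist x y, dist_self, dist_comm, dist_triangle, fun _ _ => dist_nonneg,
    fun x y => PseudoMetricSpace.dist_ofPreNNDist_le r h0 hs x y,
    fun x y => PseudoMetricSpace.le_two_mul_dist_ofPreNNDist r h0 hs h3 x y⟩

lemma aux_cpt {M : Type*} [MetricSpace M] [CompactSpace M]
    (f : M → M) (hf : Continuous f) (c e : ℝ) (he : 0 < e)
    (hexp : ∀ x y : M, x ≠ y → ∃ n : ℕ, c < dist (f^[n] x) (f^[n] y)) :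
    ∃ m : ℕ, ∀ x y, e ≤ dist x y → ∃ n ≤ m, c < dist (f^[n] x) (f^[n] y) := by
  have hK : IsCompact {p : M × M | e ≤ dist p.1 p.2} :=
    (isClosed_le continuous_const (by fun_prop)).isCompact
  obtain ⟨m, hm⟩ := hK.elim_directed_cover
    (fun m : ℕ => {p : M × M | ∃ n ≤ m, c < dist (f^[n] p.1) (f^[n] p.2)}) (by
      intro m
      have : {p : M × M | ∃ n ≤ m, c < dist (f^[n] p.1) (f^[n] p.2)} =
        ⋃ n, ⋃ (_ : n ≤ m), {p : M × M | c < dist (f^[n] p.1) (f^[n] p.2)} := by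
        ext p; simp
      rw [this]
      refine isOpen_iUnion fun n => isOpen_iUnion fun _ => isOpen_lt continuous_const ?_
      have := hf.iterate n
      fun_prop) (by
      rintro ⟨x, y⟩ hp
      have hne : x ≠ y := by
        rintro rfl
        simp only [Set.mem_setOf_eq, dist_self] at hp
        linarith
      obtain ⟨n, hn⟩ := hexp x y hne
      exact Set.mem_iUnion.mpr ⟨n, n, le_rfl, hn⟩) (by
      refine directed_of_isDirected_le ?_
      rintro i j hij p ⟨n, hn, h⟩
      exact ⟨n, hn.trans hij, h⟩)
  exact ⟨m, fun x y h => hm (show (x, y) ∈ _ from h)⟩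

/-- every positively expansive continuous map of a compact metric space
admits a compatible metric that exactly expands small distances. -/
theorem stmt_1 {M : Type*} [m : MetricSpace M] [CompactSpace M]
    (f : M → M) (hf : Continuous f)
    (c : ℝ) (hc : 0 < c)
    (hexp : ∀ x y : M, x ≠ y → ∃ n : ℕ, c < dist (f^[n] x) (f^[n] y)) :
    ∃ m' : MetricSpace M,
      m'.toUniformSpace.toTopologicalSpace = m.toUniformSpace.toTopologicalSpace ∧
      ∃ ξ > (0 : ℝ), ∃ lam > (1 : ℝ), ∀ x y : M,
        m'.dist x y < ξ → m'.dist (f x) (f y) = lam * m'.dist x y := by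
  classical
  obtain ⟨q, hq⟩ := aux_cpt f hf c (c / 3) (by positivity) hexp
  -- choose the constants
  obtain ⟨a, ha0, ha1, haq⟩ : ∃ a : NNReal, 0 < a ∧ a < 1 ∧ 1 ≤ 2 * a ^ q := by
    have ht : Tendsto (fun t : NNReal => 2 * t ^ q) (𝓝[<] 1) (𝓝 (2 * 1 ^ q)) :=
      (Continuous.tendsto (by fun_prop) 1).mono_left nhdsWithin_le_nhds
    have h1 := ht.eventually (lt_mem_nhds (show (1 : NNReal) < 2 * 1 ^ q by norm_num))
    have h2 : ∀ᶠ t : NNReal in 𝓝[<] 1, t ∈ Set.Ioo (0 : NNReal) 1 :=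
      Ioo_mem_nhdsLT (by norm_num)
    haveI : (𝓝[<] (1 : NNReal)).NeBot := nhdsLT_neBot_of_exists_lt ⟨0, by norm_num⟩
    obtain ⟨t, h, h'⟩ := (h1.and h2).exists
    exact ⟨t, h'.1, h'.2, h.le⟩
  obtain ⟨b, hab, hb1⟩ : ∃ b : ℝ, (a : ℝ) < b ∧ b < 1 := exists_between (by exact_mod_cast ha1)
  have ha0' : (0 : ℝ) < a := by exact_mod_cast ha0
  have hb0 : 0 < b := ha0'.trans hab
  obtain ⟨k, hk⟩ : ∃ k : ℕ, 2 * (a : ℝ) ^ k < b ^ k := by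
    obtain ⟨k, hk⟩ := exists_pow_lt_of_lt_one (show (0 : ℝ) < 1 / 2 by norm_num)
      (show (a : ℝ) / b < 1 by rwa [div_lt_one hb0])
    refine ⟨k, ?_⟩
    rw [div_pow, div_lt_iff₀ (by positivity)] at hk
    linarith
  -- the separation time
  obtain ⟨N, hN1, hN2⟩ : ∃ N : M → M → ℕ,
      (∀ x y, x ≠ y → c < dist (f^[N x y] x) (f^[N x y] y)) ∧
      (∀ x y n, c < dist (f^[n] x) (f^[n] y) → N x y ≤ n) := by
    refine ⟨fun x y => sInf {n | c < dist (f^[n] x) (f^[n] y)}, ?_, ?_⟩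
    · intro x y h
      exact Nat.sInf_mem (hexp x y h)
    · intro x y n h
      exact Nat.sInf_le h
  have hNs : ∀ x y, x ≠ y → N x y = N y x := by
    intro x y h
    apply le_antisymm
    · apply hN2; rw [dist_comm]; exact hN1 y x h.symm
    · apply hN2; rw [dist_comm]; exact hN1 x y h
  have hNf : ∀ x y n, x ≠ y → n ≤ N x y →
      f^[n] x ≠ f^[n] y ∧ N (f^[n] x) (f^[n] y) + n = N x y := by
    intro x y n h hn
    have e : N x y = (N x y - n) + n := by omega
    have h1 := hN1 x y h
    rw [e, Function.iterate_add_apply, Function.iterate_add_apply] at h1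
    have hne : f^[n] x ≠ f^[n] y := by
      intro h'
      rw [h', dist_self] at h1
      linarith
    refine ⟨hne, ?_⟩
    have h2 := hN2 _ _ _ h1
    have h3 := hN1 _ _ hne
    rw [← Function.iterate_add_apply, ← Function.iterate_add_apply] at h3
    have h4 := hN2 _ _ _ h3
    omega
  set r : M → M → NNReal := fun x y => if x = y then 0 else a ^ N x y with hr
  have hrne : ∀ x y, x ≠ y → r x y = a ^ N x y := fun x y h => by simp [hr, h]
  have hr1 : ∀ x y, r x y ≤ 1 := by
    intro x y
    by_cases h : x = y
    · simp [hr, h]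
    · rw [hrne x y h]; exact pow_le_one₀ ha0.le ha1.le
  have key : ∀ x y n, c / 3 ≤ dist (f^[n] x) (f^[n] y) → a ^ n ≤ 2 * r x y := by
    intro x y n h
    have hne : x ≠ y := by
      rintro rfl
      rw [dist_self] at h
      linarith
    obtain ⟨j, hj, h'⟩ := hq _ _ h
    rw [← Function.iterate_add_apply, ← Function.iterate_add_apply] at h'
    have h2 := hN2 _ _ _ h'
    rw [hrne x y hne]
    calc a ^ n = 1 * a ^ n := by simp
      _ ≤ (2 * a ^ q) * a ^ n := by gcongr
      _ = 2 * a ^ (q + n) := by ring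
      _ ≤ 2 * a ^ N x y := by
        gcongr 2 * ?_
        exact pow_le_pow_of_le_one ha0.le ha1.le (by omega)
  obtain ⟨D, D0, Ds, Dt, Dn, Dr, rD⟩ := aux_frink r (by simp [hr]) (by
      intro x y
      by_cases h : x = y
      · simp [h]
      · rw [hrne x y h, hrne y x (Ne.symm h), hNs x y h]) (by
      intro x y z w
      by_cases h : x = w
      · simp [hr, h]
      rw [hrne x w h]
      have h1 := hN1 x w h
      set n := N x w
      have t1 := dist_triangle4 (f^[n] x) (f^[n] y) (f^[n] z) (f^[n] w)
      rcases le_or_gt (c / 3) (dist (f^[n] x) (f^[n] y)) with h2 | h2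
      · refine (key _ _ _ h2).trans ?_
        gcongr; simp
      rcases le_or_gt (c / 3) (dist (f^[n] y) (f^[n] z)) with h3 | h3
      · refine (key _ _ _ h3).trans ?_
        gcongr; simp
      rcases le_or_gt (c / 3) (dist (f^[n] z) (f^[n] w)) with h4 | h4
      · refine (key _ _ _ h4).trans ?_
        gcongr; simp
      linarith)
  have D1 : ∀ x y, D x y ≤ 1 := fun x y => (Dr x y).trans (by exact_mod_cast hr1 x y)
  -- the metric
  set d : M → M → ℝ := fun x y => ⨆ n : ℕ, D (f^[n] x) (f^[n] y) * b ^ n with hd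
  have hbdd : ∀ x y, BddAbove (Set.range fun n : ℕ => D (f^[n] x) (f^[n] y) * b ^ n) := by
    intro x y
    refine ⟨1, ?_⟩
    rintro _ ⟨n, rfl⟩
    exact mul_le_one₀ (D1 _ _) (by positivity) (pow_le_one₀ hb0.le hb1.le)
  have hle : ∀ x y n, D (f^[n] x) (f^[n] y) * b ^ n ≤ d x y := fun x y n => le_ciSup (hbdd x y) n
  have hDd : ∀ x y, D x y ≤ d x y := fun x y => by simpa using hle x y 0
  have d0 : ∀ x, d x x = 0 := by intro x; simp [hd, D0]
  have ds : ∀ x y, d x y = d y x := by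
    intro x y; simp only [hd]; congr 1; ext n; rw [Ds]
  have dt : ∀ x y z, d x z ≤ d x y + d y z := by
    intro x y z
    refine ciSup_le fun n => ?_
    have h1 := hle x y n
    have h2 := hle y z n
    have h3 := mul_le_mul_of_nonneg_right (Dt (f^[n] x) (f^[n] y) (f^[n] z)) (pow_pos hb0 n).le
    linarith
  have hrd : ∀ x y, (r x y : ℝ) ≤ 2 * d x y := fun x y => by linarith [rD x y, hDd x y]
  have deq : ∀ x y, d x y = 0 → x = y := by
    intro x y h
    by_contra hne
    have h1 := hrd x y
    rw [h, hrne x y hne] at h1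
    push_cast at h1
    have : (0 : ℝ) < (a : ℝ) ^ N x y := by positivity
    linarith
  have dN : ∀ x y, x ≠ y → d x y ≤ b ^ N x y := by
    intro x y hne
    refine ciSup_le fun n => ?_
    rcases le_total n (N x y) with h | h
    · obtain ⟨h1, h2⟩ := hNf x y n hne h
      have h3 := Dr (f^[n] x) (f^[n] y)
      rw [hrne _ _ h1] at h3
      push_cast at h3
      rw [← h2, pow_add]
      gcongr
      exact h3.trans (by gcongr)
    · calc _ ≤ 1 * b ^ n := by gcongr; exact D1 _ _
        _ ≤ b ^ N x y := by rw [one_mul]; exact pow_le_pow_of_le_one hb0.le hb1.le h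
  have hcont : ∀ x, ∀ ε > 0, ∀ᶠ y in 𝓝 x, d y x < ε := by
    intro x ε hε
    obtain ⟨K, hK⟩ := exists_pow_lt_of_lt_one hε hb1
    have hev : ∀ᶠ y in 𝓝 x, ∀ n ∈ Finset.range K, dist (f^[n] y) (f^[n] x) < c := by
      rw [Filter.eventually_all_finset]
      intro n _
      exact (Metric.tendsto_nhds.mp ((hf.iterate n).tendsto x)) c hc
    filter_upwards [hev] with y hy
    by_cases hne : y = x
    · rw [hne, d0]; exact hε
    refine (dN y x hne).trans_lt (lt_of_le_of_lt ?_ hK)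
    refine pow_le_pow_of_le_one hb0.le hb1.le ?_
    by_contra! h
    have h1 := hy _ (Finset.mem_range.mpr h)
    have h2 := hN1 y x hne
    linarith
  let m' : MetricSpace M :=
    { dist := d
      dist_self := d0
      dist_comm := ds
      dist_triangle := dt
      eq_of_dist_eq_zero := fun {x y} h => deq x y h }
  refine ⟨m', ?_, (a : ℝ) ^ k / 2, by positivity, b⁻¹, (one_lt_inv₀ hb0).mpr hb1, ?_⟩
  · apply aux_top
    · infer_instance
    · exact @T25Space.t2Space M _ (@T3Space.t25Space M _ (@T4Space.t3Space M _ inferInstance))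
    · refine (@continuous_iff_continuousAt M M m.toUniformSpace.toTopologicalSpace
        m'.toUniformSpace.toTopologicalSpace id).mpr ?_
      intro x
      refine (@Metric.tendsto_nhds M M m'.toPseudoMetricSpace _ id x).mpr ?_
      intro ε hε
      exact hcont x ε hε
  · intro x y hxy
    change d x y < _ at hxy
    change d (f x) (f y) = b⁻¹ * d x y
    have hstep : ∀ n, b * (D (f^[n] (f x)) (f^[n] (f y)) * b ^ n) =
        D (f^[n + 1] x) (f^[n + 1] y) * b ^ (n + 1) := by
      intro n
      rw [Function.iterate_succ_apply, Function.iterate_succ_apply]; ring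
    have hge : ∀ n, D (f^[n + 1] x) (f^[n + 1] y) * b ^ (n + 1) ≤ b * d (f x) (f y) := by
      intro n
      rw [← hstep n]
      exact mul_le_mul_of_nonneg_left (hle _ _ n) hb0.le
    by_cases hne : x = y
    · rw [hne, d0, d0]; simp
    have hkN : k ≤ N x y := by
      by_contra! h
      have h1 := hrd x y
      rw [hrne x y hne] at h1
      push_cast at h1
      have h2 : (a : ℝ) ^ k ≤ (a : ℝ) ^ N x y :=
        pow_le_pow_of_le_one ha0'.le (by exact_mod_cast ha1.le) h.le
      linarith
    have main : D x y ≤ D (f^[k] x) (f^[k] y) * b ^ k := by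
      obtain ⟨h1, h2⟩ := hNf x y k hne hkN
      have h3 := rD (f^[k] x) (f^[k] y)
      have h4 := Dr x y
      rw [hrne _ _ h1] at h3
      rw [hrne _ _ hne, ← h2, pow_add] at h4
      push_cast at h3 h4
      have h5 := Dn (f^[k] x) (f^[k] y)
      calc D x y ≤ _ := h4
        _ ≤ (2 * D (f^[k] x) (f^[k] y)) * (a : ℝ) ^ k := by gcongr
        _ = D (f^[k] x) (f^[k] y) * (2 * (a : ℝ) ^ k) := by ring
        _ ≤ _ := by gcongr
    have hfin : d x y = b * d (f x) (f y) := by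
      apply le_antisymm
      · refine ciSup_le fun n => ?_
        rcases n with _ | n
        · rcases k with _ | k
          · norm_num at hk
          · simpa using main.trans (hge k)
        · exact hge n
      · rw [← le_div_iff₀' hb0]
        refine ciSup_le fun n => ?_
        rw [le_div_iff₀' hb0, hstep]
        exact hle x y (n + 1)
    rw [hfin]
    field_simp
end

section
/- Let f be an expansive homeomorphism of a compact metric space (M,d) with expansivity constant ξ, where d is self-similar for f with expanding factor λ > 1 and constant ξ. Then for all ε > 0 there is δ > 0 such that if (x,y,z) is a dynamical triangle with x ≠ y and max{d(x,y), d(x,z), d(y,z)} < δ, then |d(x,y)/max{d(x,z), d(z,y)} − 1| < ε. -/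
open Filter Topology

/-- The self-similarity hypothesis. -/
def SelfSim {M : Type*} [MetricSpace M] (ξ lam : ℝ) (g : Equiv.Perm M) : Prop :=
  ∀ p q : M, dist p q ≤ ξ →
      max (dist (g p) (g q)) (dist (g.symm p) (g.symm q)) = lam * dist p q

theorem SelfSim.symm' {M : Type*} [MetricSpace M] {ξ lam : ℝ} {g : Equiv.Perm M}
    (h : SelfSim ξ lam g) : SelfSim ξ lam g.symm := by
  intro p q hpq
  rw [max_comm]
  exact h p q hpq

theorem step_le {M : Type*} [MetricSpace M] {ξ lam : ℝ} {g : Equiv.Perm M}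
    (h : SelfSim ξ lam g) (p q : M) (hpq : dist p q ≤ ξ) :
    dist (g p) (g q) ≤ lam * dist p q := by
  rw [← h p q hpq]; exact le_max_left _ _

theorem upper {M : Type*} [MetricSpace M] {ξ lam : ℝ} {g : Equiv.Perm M}
    (hlam : 1 < lam) (h : SelfSim ξ lam g) (p q : M) (N : ℕ)
    (hpq : lam ^ N * dist p q ≤ ξ) (n : ℕ) (hn : n ≤ N) :
    dist ((g ^ n) p) ((g ^ n) q) ≤ lam ^ n * dist p q ∧ dist ((g ^ n) p) ((g ^ n) q) ≤ ξ := by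
  have key : ∀ m ≤ N, lam ^ m * dist p q ≤ ξ := by
    intro m hm
    refine le_trans ?_ hpq
    have := pow_le_pow_right₀ hlam.le hm
    exact mul_le_mul_of_nonneg_right this dist_nonneg
  suffices H : dist ((g ^ n) p) ((g ^ n) q) ≤ lam ^ n * dist p q from ⟨H, H.trans (key n hn)⟩
  induction n with
  | zero => simp
  | succ n ih =>
    have h1 := ih (by omega)
    have h2 := step_le h _ _ (h1.trans (key n (by omega)))
    rw [pow_succ' g]
    simp only [Equiv.Perm.mul_apply]
    refine h2.trans ?_
    rw [pow_succ', mul_assoc]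
    exact mul_le_mul_of_nonneg_left h1 (by linarith)

theorem grow {M : Type*} [MetricSpace M] {ξ lam : ℝ} {g : Equiv.Perm M}
    (hlam : 1 < lam) (h : SelfSim ξ lam g) (p q : M)
    (hg : dist (g p) (g q) = lam * dist p q) (n : ℕ)
    (hn : ∀ m ≤ n, dist ((g ^ m) p) ((g ^ m) q) ≤ ξ) :
    dist ((g ^ n) p) ((g ^ n) q) = lam ^ n * dist p q ∧
    dist (g ((g ^ n) p)) (g ((g ^ n) q)) = lam * dist ((g ^ n) p) ((g ^ n) q) := by
  induction n with
  | zero => simpa using hg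
  | succ n ih =>
    obtain ⟨h1, h2⟩ := ih (fun m hm => hn m (by omega))
    have h3 := h _ _ (hn (n+1) le_rfl)
    rw [pow_succ' g] at h3 ⊢
    simp only [Equiv.Perm.mul_apply, Equiv.symm_apply_apply] at h3 ⊢
    refine ⟨by rw [h2, h1]; ring, ?_⟩
    rcases max_choice (dist (g (g ((g ^ n) p))) (g (g ((g ^ n) q))))
      (dist ((g ^ n) p) ((g ^ n) q)) with h4 | h4
    · rw [← h3, h4]
    · have h5 := h3
      rw [h4, h2] at h5
      have h0 : dist ((g ^ n) p) ((g ^ n) q) = 0 := by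
        have : (lam * lam - 1) * dist ((g ^ n) p) ((g ^ n) q) = 0 := by linarith
        rcases mul_eq_zero.1 this with h6 | h6
        · nlinarith
        · exact h6
      have := dist_eq_zero.1 h0
      rw [this]; simp

theorem unst {M : Type*} [MetricSpace M] {ξ lam : ℝ} {g : Equiv.Perm M}
    (hlam : 1 < lam) (h : SelfSim ξ lam g) (p q : M)
    (hn : ∀ n : ℕ, dist ((g.symm ^ n) p) ((g.symm ^ n) q) ≤ ξ) :
    dist (g p) (g q) = lam * dist p q := by
  have h0 := h p q (by simpa using hn 0)
  rcases max_choice (dist (g p) (g q)) (dist (g.symm p) (g.symm q)) with h4 | h4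
  · rw [← h0, h4]
  · rw [h4] at h0
    by_cases hpq : p = q
    · subst hpq; simp
    · exfalso
      have hd := dist_pos.2 hpq
      obtain ⟨n, hn'⟩ := pow_unbounded_of_one_lt (ξ / dist p q) hlam
      have h1 := (grow hlam h.symm' p q h0 n (fun m _ => hn m)).1
      have h2 := hn n
      rw [h1] at h2
      rw [div_lt_iff₀ hd] at hn'
      linarith

theorem unst_back {M : Type*} [MetricSpace M] {ξ lam : ℝ} {g : Equiv.Perm M}
    (hlam : 1 < lam) (h : SelfSim ξ lam g) (p q : M)
    (hn : ∀ n : ℕ, dist ((g.symm ^ n) p) ((g.symm ^ n) q) ≤ ξ) (n : ℕ) :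
    lam ^ n * dist ((g.symm ^ n) p) ((g.symm ^ n) q) = dist p q := by
  induction n with
  | zero => simp
  | succ n ih =>
    have := unst hlam h ((g.symm ^ (n+1)) p) ((g.symm ^ (n+1)) q) (by
      intro m
      have := hn (m + (n+1))
      rwa [pow_add] at this)
    have e : ∀ r, g ((g.symm ^ (n+1)) r) = (g.symm ^ n) r := by
      intro r
      rw [pow_succ']; simp only [Equiv.Perm.mul_apply, Equiv.apply_symm_apply]
    rw [e, e] at this
    rw [← ih, this]; ring

/-- One-sided estimates: `z` in the unstable set of `x` and the stable set of `y`. -/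
theorem one_side {M : Type*} [MetricSpace M] {ξ lam : ℝ} {g : Equiv.Perm M}
    (hlam : 1 < lam) (h : SelfSim ξ lam g) (x y z : M) (N : ℕ)
    (hx : ∀ n : ℕ, dist ((g.symm ^ n) x) ((g.symm ^ n) z) ≤ ξ)
    (hy : ∀ n : ℕ, dist ((g ^ n) y) ((g ^ n) z) ≤ ξ)
    (hxy : lam ^ N * dist x y ≤ ξ) (hxz : lam ^ N * dist x z ≤ ξ) :
    dist x z - dist z y / lam ^ (2 * N) ≤ dist x y ∧
    (dist (g x) (g y) = lam * dist x y → dist x y ≤ dist x z + dist z y / lam ^ (2 * N)) := by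
  have hp : 0 < lam ^ N := by positivity
  have hu := (grow hlam h x z (unst hlam h x z hx) N
    (fun m hm => (upper hlam h x z N hxz m hm).2)).1
  have hs := unst_back hlam h.symm' y z hy N
  simp only [Equiv.symm_symm] at hs
  rw [dist_comm y z] at hs
  have hs' : dist z y / lam ^ (2 * N) = dist ((g ^ N) y) ((g ^ N) z) / lam ^ N := by
    rw [← hs, two_mul, pow_add]; field_simp
  rw [hs']
  have t1 := dist_triangle ((g ^ N) x) ((g ^ N) y) ((g ^ N) z)
  have t2 := dist_triangle_right ((g ^ N) x) ((g ^ N) y) ((g ^ N) z)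
  have hD := (upper hlam h x y N hxy N le_rfl).1
  constructor
  · have : dist x z ≤ dist x y + dist ((g ^ N) y) ((g ^ N) z) / lam ^ N := by
      rw [← mul_le_mul_iff_right₀ hp, mul_add, mul_div_cancel₀ _ hp.ne']
      linarith
    linarith
  · intro hg
    have hD' := (grow hlam h x y hg N (fun m hm => (upper hlam h x y N hxy m hm).2)).1
    rw [← mul_le_mul_iff_right₀ hp, mul_add, mul_div_cancel₀ _ hp.ne']
    linarith

theorem stmt_9 {M : Type*} [MetricSpace M] [CompactSpace M]
    (f : Equiv.Perm M) (hf : Continuous f) (hf' : Continuous f.symm)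
    (ξ lam : ℝ) (hξ : 0 < ξ) (hlam : 1 < lam)
    (hexp : ∀ x y : M, x ≠ y → ∃ n : ℤ, ξ < dist ((f ^ n) x) ((f ^ n) y))
    (hss : ∀ p q : M, dist p q ≤ ξ →
      max (dist (f p) (f q)) (dist (f.symm p) (f.symm q)) = lam * dist p q) :
    ∀ ε > (0 : ℝ), ∃ δ > (0 : ℝ), ∀ x y z : M,
      (∀ n : ℕ, dist ((f.symm ^ n) x) ((f.symm ^ n) z) ≤ ξ / (2 * lam)) →
      (∀ n : ℕ, dist ((f ^ n) y) ((f ^ n) z) ≤ ξ / (2 * lam)) →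
      x ≠ y →
      max (dist x y) (max (dist x z) (dist y z)) < δ →
      |dist x y / max (dist x z) (dist z y) - 1| < ε := by
  intro ε hε
  obtain ⟨N, hN⟩ := pow_unbounded_of_one_lt (1 / ε) hlam
  have hp : 0 < lam ^ N := by positivity
  have hN2 : 1 / ε < lam ^ (2 * N) :=
    hN.trans_le (pow_le_pow_right₀ hlam.le (by omega))
  have hp2 : 0 < lam ^ (2 * N) := by positivity
  have hη : 1 / lam ^ (2 * N) < ε := by
    rw [div_lt_iff₀ hε] at hN2
    rw [div_lt_iff₀ hp2]; linarith
  refine ⟨ξ / lam ^ N, by positivity, ?_⟩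
  intro x y z hx hy hne hmax
  rw [max_lt_iff, max_lt_iff, lt_div_iff₀ hp, lt_div_iff₀ hp, lt_div_iff₀ hp] at hmax
  obtain ⟨m1, m2, m3⟩ := hmax
  have hC : ξ / (2 * lam) ≤ ξ := div_le_self hξ.le (by linarith)
  have hx' := fun n => (hx n).trans hC
  have hy' := fun n => (hy n).trans hC
  have hS : SelfSim ξ lam f := hss
  obtain ⟨a1, a2⟩ := one_side hlam hS x y z N hx' hy' (by linarith) (by linarith)
  obtain ⟨b1, b2⟩ := one_side hlam hS.symm' y x z N hy' hx'
    (by rw [dist_comm]; linarith) (by linarith)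
  rw [dist_comm y z, dist_comm z x, dist_comm y x] at b1 b2
  rw [dist_comm (f.symm y)] at b2
  have h0 := hss x y (by
    have : 1 ≤ lam ^ N := one_le_pow₀ hlam.le
    nlinarith [dist_nonneg (x := x) (y := y)])
  set u := dist x z
  set s := dist z y
  have hD : 0 < dist x y := dist_pos.2 hne
  have htri : dist x y ≤ u + s := dist_triangle x z y
  set D := dist x y
  have hm1 : u ≤ max u s := le_max_left _ _
  have hm2 : s ≤ max u s := le_max_right _ _
  have hcase : max u s = u ∨ max u s = s := max_choice u s
  set m := max u s
  have hm : 0 < m := by linarith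
  have d1 : s / lam ^ (2 * N) ≤ m / lam ^ (2 * N) := by gcongr
  have d2 : u / lam ^ (2 * N) ≤ m / lam ^ (2 * N) := by gcongr
  have d3 : m / lam ^ (2 * N) < ε * m := by
    rw [div_eq_mul_one_div, mul_comm]; exact mul_lt_mul_of_pos_right hη hm
  have up : D ≤ m + m / lam ^ (2 * N) := by
    rcases max_choice (dist (f x) (f y)) (dist (f.symm x) (f.symm y)) with h4 | h4
    · have := a2 (by rw [← h0, h4]); linarith
    · have := b2 (by rw [← h0, h4]); linarith
  have low : m - m / lam ^ (2 * N) ≤ D := by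
    rcases hcase with h | h <;> linarith
  rw [div_sub_one hm.ne', abs_div, abs_of_pos hm, div_lt_iff₀ hm, abs_lt]
  constructor <;> linarith
end

section
/- Let f be an expansive homeomorphism of a compact metric space (M,d) with expansivity constant ξ, where d is self-similar for f with expanding factor λ > 1 and constant ξ. Then for every subset X ⊆ M the limit lim_{ε→0} log cov_ε(X,d)/(−log ε) exists and equals ent(X)/log(λ). -/
open Filter Topology

/-- Diameter of a set with respect to an arbitrary "metric" `ρ`. -/
noncomputable def rdiam {M : Type*} (ρ : M → M → ℝ) (A : Set M) : ℝ :=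
  sSup {r : ℝ | ∃ a ∈ A, ∃ b ∈ A, r = ρ a b}

/-- Minimal cardinality of a finite cover of `X` by sets of `ρ`-diameter `< ε`. -/
noncomputable def covN {M : Type*} (X : Set M) (ρ : M → M → ℝ) (ε : ℝ) : ℕ :=
  sInf {n : ℕ | ∃ U : Fin n → Set M, X ⊆ (⋃ i, U i) ∧ ∀ i, rdiam ρ (U i) < ε}

/-- `dᶠₙ(x,y) = max_{|k| ≤ n} d(fᵏ x, fᵏ y)`. -/
noncomputable def dFn {M : Type*} [MetricSpace M] (f : Equiv.Perm M) (n : ℕ) (x y : M) : ℝ :=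
  sSup {r : ℝ | ∃ k : ℤ, |k| ≤ (n : ℤ) ∧ r = dist ((f ^ k) x) ((f ^ k) y)}

theorem aux_bddAbove {M : Type*} (ρ : M → M → ℝ) (C : ℝ) (hC : ∀ a b, ρ a b ≤ C) (A : Set M) :
    BddAbove {r : ℝ | ∃ a ∈ A, ∃ b ∈ A, r = ρ a b} := by
  refine ⟨C, ?_⟩
  rintro r ⟨a, _, b, _, rfl⟩
  exact hC a b

/-- `rdiam < ε` is equivalent to a uniform strict bound. -/
theorem aux_rdiam_lt {M : Type*} (ρ : M → M → ℝ) (C : ℝ) (hC : ∀ a b, ρ a b ≤ C)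
    (A : Set M) (ε : ℝ) (hε : 0 < ε) :
    rdiam ρ A < ε ↔ ∃ s, 0 ≤ s ∧ s < ε ∧ ∀ a ∈ A, ∀ b ∈ A, ρ a b ≤ s := by
  constructor
  · intro h
    refine ⟨max 0 (rdiam ρ A), le_max_left _ _, max_lt hε h, fun a ha b hb => ?_⟩
    exact (le_csSup (aux_bddAbove ρ C hC A) ⟨a, ha, b, hb, rfl⟩).trans (le_max_right _ _)
  · rintro ⟨s, hs, hsε, h⟩
    refine lt_of_le_of_lt ?_ hsε
    refine Real.sSup_le ?_ hs
    rintro r ⟨a, ha, b, hb, rfl⟩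
    exact h a ha b hb

theorem aux_dist_le {M : Type*} [MetricSpace M] [CompactSpace M] (a b : M) :
    dist a b ≤ Metric.diam (Set.univ : Set M) :=
  Metric.dist_le_diam_of_mem isCompact_univ.isBounded (Set.mem_univ _) (Set.mem_univ _)

theorem aux_dFn_le {M : Type*} [MetricSpace M] [CompactSpace M] (f : Equiv.Perm M) (n : ℕ)
    (x y : M) (s : ℝ) :
    dFn f n x y ≤ s ↔ ∀ k : ℤ, |k| ≤ (n : ℤ) → dist ((f ^ k) x) ((f ^ k) y) ≤ s := by
  constructor
  · intro h k hk
    unfold dFn at h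
    refine le_trans (le_csSup (s := {r : ℝ | ∃ k : ℤ, |k| ≤ (n : ℤ) ∧
      r = dist ((f ^ k) x) ((f ^ k) y)}) ?_ ⟨k, hk, rfl⟩) h
    refine ⟨Metric.diam (Set.univ : Set M), ?_⟩
    rintro r ⟨k, _, rfl⟩
    exact aux_dist_le _ _
  · intro h
    refine csSup_le ⟨_, 0, by simp, rfl⟩ ?_
    rintro r ⟨k, hk, rfl⟩
    exact h k hk

theorem aux_step {M : Type*} [MetricSpace M] (f : Equiv.Perm M) (ξ lam : ℝ)
    (hss : ∀ p q : M, dist p q ≤ ξ →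
      max (dist (f p) (f q)) (dist (f.symm p) (f.symm q)) = lam * dist p q)
    (x y : M) (k : ℤ) (h : dist ((f ^ k) x) ((f ^ k) y) ≤ ξ) :
    max (dist ((f ^ (k + 1)) x) ((f ^ (k + 1)) y)) (dist ((f ^ (k - 1)) x) ((f ^ (k - 1)) y))
      = lam * dist ((f ^ k) x) ((f ^ k) y) := by
  have h1 : f ^ (k + 1) = f * f ^ k := by rw [add_comm, zpow_add, zpow_one]
  have h2 : f ^ (k - 1) = f⁻¹ * f ^ k := by
    rw [sub_eq_add_neg, add_comm, zpow_add, zpow_neg, zpow_one]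
  rw [h1, h2]
  exact hss _ _ h

theorem aux_A {M : Type*} [MetricSpace M] (f : Equiv.Perm M) (ξ lam : ℝ) (hlam : 1 < lam)
    (hss : ∀ p q : M, dist p q ≤ ξ →
      max (dist (f p) (f q)) (dist (f.symm p) (f.symm q)) = lam * dist p q)
    (x y : M) (n : ℕ) : ∀ s : ℝ, 0 ≤ s → s ≤ ξ →
    (∀ k : ℤ, |k| ≤ (n : ℤ) → dist ((f ^ k) x) ((f ^ k) y) ≤ s) → dist x y ≤ s / lam ^ n := by
  induction n with
  | zero => intro s _ _ h; simpa using h 0 (by simp)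
  | succ n ih =>
    intro s hs0 hs h
    have h0 : 0 < lam := by linarith
    have hdiv : s / lam ≤ s := div_le_self hs0 hlam.le
    have := ih (s / lam) (by positivity) (hdiv.trans hs) (fun k hk => by
      rw [le_div_iff₀ h0, mul_comm,
        ← aux_step f ξ lam hss x y k ((h k (by push_cast; omega)).trans hs)]
      rw [abs_le] at hk
      exact max_le (h _ (by rw [abs_le]; push_cast; omega))
        (h _ (by rw [abs_le]; push_cast; omega)))
    rwa [div_div, ← pow_succ'] at this

theorem aux_B {M : Type*} [MetricSpace M] (f : Equiv.Perm M) (ξ lam : ℝ) (hlam : 1 < lam)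
    (hss : ∀ p q : M, dist p q ≤ ξ →
      max (dist (f p) (f q)) (dist (f.symm p) (f.symm q)) = lam * dist p q)
    (x y : M) (n : ℕ) : ∀ s : ℝ, 0 ≤ s → s ≤ ξ → dist x y ≤ s / lam ^ n →
    (∀ k : ℤ, |k| ≤ (n : ℤ) → dist ((f ^ k) x) ((f ^ k) y) ≤ s) := by
  induction n with
  | zero =>
    intro s _ _ h k hk
    have : k = 0 := by simpa using hk
    subst this
    simpa using h
  | succ n ih =>
    intro s hs0 hs h k hk
    have h0 : 0 < lam := by linarith
    have hdiv : s / lam ≤ s := div_le_self hs0 hlam.le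
    have key := ih (s / lam) (by positivity) (hdiv.trans hs) (by rwa [div_div, ← pow_succ'])
    have hstep : ∀ j : ℤ, |j| ≤ (n : ℤ) →
        max (dist ((f ^ (j + 1)) x) ((f ^ (j + 1)) y))
          (dist ((f ^ (j - 1)) x) ((f ^ (j - 1)) y)) ≤ s := fun j hj => by
      have h1 := key j hj
      rw [aux_step f ξ lam hss x y j (h1.trans (hdiv.trans hs)), mul_comm]
      rwa [le_div_iff₀ h0] at h1
    rw [abs_le] at hk
    push_cast at hk
    rcases lt_trichotomy k 0 with hk0 | hk0 | hk0
    · have := (le_max_right _ _).trans (hstep (k + 1) (by rw [abs_le]; omega))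
      simpa using this
    · exact (key k (by subst hk0; simp)).trans hdiv
    · have := (le_max_left _ _).trans (hstep (k - 1) (by rw [abs_le]; omega))
      simpa using this

/-- The two covering numbers agree exactly. -/
theorem aux_cov_eq {M : Type*} [MetricSpace M] [CompactSpace M]
    (f : Equiv.Perm M) (ξ lam : ℝ) (hξ : 0 < ξ) (hlam : 1 < lam)
    (hss : ∀ p q : M, dist p q ≤ ξ →
      max (dist (f p) (f q)) (dist (f.symm p) (f.symm q)) = lam * dist p q)
    (X : Set M) (n : ℕ) :
    covN X (dFn f n) ξ = covN X (fun a b => dist a b) (ξ / lam ^ n) := by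
  have h0 : 0 < lam := by linarith
  have hp : 0 < lam ^ n := by positivity
  have key : ∀ A : Set M, rdiam (dFn f n) A < ξ ↔
      rdiam (fun a b => dist a b) A < ξ / lam ^ n := by
    intro A
    rw [aux_rdiam_lt (dFn f n) (Metric.diam (Set.univ : Set M))
        (fun a b => (aux_dFn_le f n a b _).2 fun k _ => aux_dist_le _ _) A ξ hξ,
      aux_rdiam_lt _ (Metric.diam (Set.univ : Set M)) aux_dist_le A _ (by positivity)]
    constructor
    · rintro ⟨s, hs0, hs, h⟩
      refine ⟨s / lam ^ n, by positivity, by gcongr, fun a ha b hb => ?_⟩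
      exact aux_A f ξ lam hlam hss a b n s hs0 hs.le ((aux_dFn_le f n a b s).1 (h a ha b hb))
    · rintro ⟨s, hs0, hs, h⟩
      rw [lt_div_iff₀ hp] at hs
      refine ⟨s * lam ^ n, by positivity, hs, fun a ha b hb => ?_⟩
      refine (aux_dFn_le f n a b _).2
        (aux_B f ξ lam hlam hss a b n _ (by positivity) hs.le ?_)
      rw [mul_div_cancel_right₀ _ hp.ne']
      exact h a ha b hb
  unfold covN
  simp only [key]

theorem aux_cov_nonempty {M : Type*} [MetricSpace M] [CompactSpace M] (X : Set M) (ε : ℝ)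
    (hε : 0 < ε) : {n : ℕ | ∃ U : Fin n → Set M, X ⊆ (⋃ i, U i) ∧
      ∀ i, rdiam (fun a b : M => dist a b) (U i) < ε}.Nonempty := by
  obtain ⟨t, -, htf, ht⟩ := finite_cover_balls_of_compact (isCompact_univ (X := M))
    (e := ε / 3) (by positivity)
  obtain ⟨n, g, hg⟩ := htf.fin_embedding
  refine ⟨n, fun i => Metric.ball (g i) (ε / 3), ?_, fun i => ?_⟩
  · intro x _
    have := ht (Set.mem_univ x)
    simp only [Set.mem_iUnion] at this ⊢
    obtain ⟨c, hc, hx⟩ := this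
    rw [← hg] at hc
    obtain ⟨i, rfl⟩ := hc
    exact ⟨i, hx⟩
  · rw [aux_rdiam_lt _ (Metric.diam (Set.univ : Set M)) aux_dist_le _ _ hε]
    refine ⟨2 * ε / 3, by positivity, by linarith, fun a ha b hb => ?_⟩
    have := dist_triangle_right a b (g i)
    rw [Metric.mem_ball] at ha hb
    linarith

theorem aux_cov_anti {M : Type*} [MetricSpace M] [CompactSpace M] (X : Set M) (ε δ : ℝ)
    (hε : 0 < ε) (h : ε ≤ δ) :
    covN X (fun a b => dist a b) δ ≤ covN X (fun a b => dist a b) ε := by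
  unfold covN
  refine csInf_le_csInf (OrderBot.bddBelow _) (aux_cov_nonempty X ε hε) ?_
  rintro n ⟨U, hU, hd⟩
  exact ⟨U, hU, fun i => (hd i).trans_le h⟩

theorem aux_log_mono {a b : ℕ} (h : a ≤ b) : Real.log (a : ℝ) ≤ Real.log (b : ℝ) := by
  rcases Nat.eq_zero_or_pos a with rfl | ha
  · simpa using Real.log_natCast_nonneg b
  · exact Real.log_le_log (by exact_mod_cast ha) (by exact_mod_cast h)

theorem stmt_12 {M : Type*} [MetricSpace M] [CompactSpace M]
    (f : Equiv.Perm M) (hf : Continuous f) (hf' : Continuous f.symm)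
    (ξ lam : ℝ) (hξ : 0 < ξ) (hlam : 1 < lam)
    (hexp : ∀ x y : M, x ≠ y → ∃ n : ℤ, ξ < dist ((f ^ n) x) ((f ^ n) y))
    (hss : ∀ p q : M, dist p q ≤ ξ →
      max (dist (f p) (f q)) (dist (f.symm p) (f.symm q)) = lam * dist p q)
    (X : Set M) (E : ℝ)
    (hE : Tendsto (fun n : ℕ =>
        Real.log ((covN X (dFn f n) ξ : ℕ) : ℝ) / (n : ℝ)) atTop (𝓝 E)) :
    Tendsto (fun ε : ℝ =>
        Real.log ((covN X (fun a b => dist a b) ε : ℕ) : ℝ) / (- Real.log ε))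
      (𝓝[>] (0 : ℝ)) (𝓝 (E / Real.log lam)) := by
  have h0 : 0 < lam := by linarith
  have hL : 0 < Real.log lam := Real.log_pos hlam
  simp only [aux_cov_eq f ξ lam hξ hlam hss X] at hE
  have hu : Tendsto (fun ε : ℝ => -Real.log ε) (𝓝[>] (0 : ℝ)) atTop :=
    tendsto_neg_atBot_atTop.comp Real.tendsto_log_nhdsGT_zero
  have hinv : Tendsto (fun ε : ℝ => (-Real.log ε)⁻¹) (𝓝[>] (0 : ℝ)) (𝓝 0) :=
    tendsto_inv_atTop_zero.comp hu
  have ht : Tendsto (fun ε : ℝ => (Real.log ξ + -Real.log ε) / Real.log lam)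
      (𝓝[>] (0 : ℝ)) atTop :=
    (tendsto_atTop_add_const_left _ _ hu).atTop_div_const hL
  have hn : Tendsto (fun ε : ℝ => ⌊(Real.log ξ + -Real.log ε) / Real.log lam⌋₊)
      (𝓝[>] (0 : ℝ)) atTop := tendsto_nat_floor_atTop.comp ht
  have hn1 : Tendsto (fun ε : ℝ => ⌊(Real.log ξ + -Real.log ε) / Real.log lam⌋₊ + 1)
      (𝓝[>] (0 : ℝ)) atTop := (tendsto_add_atTop_nat 1).comp hn
  have hr1 : Tendsto (fun ε : ℝ => ((Real.log ξ + -Real.log ε) / Real.log lam) *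
      (-Real.log ε)⁻¹) (𝓝[>] (0 : ℝ)) (𝓝 (1 / Real.log lam)) := by
    have : Tendsto (fun ε : ℝ => (Real.log ξ * (-Real.log ε)⁻¹ + 1) / Real.log lam)
        (𝓝[>] (0 : ℝ)) (𝓝 ((Real.log ξ * 0 + 1) / Real.log lam)) :=
      ((hinv.const_mul _).add_const 1).div_const _
    rw [mul_zero, zero_add] at this
    refine this.congr' ?_
    filter_upwards [hu.eventually_gt_atTop 0] with ε hε
    rw [div_mul_eq_mul_div, add_mul, mul_inv_cancel₀ hε.ne']
  have hr : Tendsto (fun ε : ℝ => (⌊(Real.log ξ + -Real.log ε) / Real.log lam⌋₊ : ℝ) *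
      (-Real.log ε)⁻¹) (𝓝[>] (0 : ℝ)) (𝓝 (1 / Real.log lam)) := by
    have := ((tendsto_nat_floor_div_atTop (R := ℝ)).comp ht).mul hr1
    rw [one_mul] at this
    refine this.congr' ?_
    filter_upwards [ht.eventually_gt_atTop 0] with ε hε
    simp only [Function.comp]
    rw [← mul_assoc, div_mul_cancel₀ _ hε.ne']
  have hr' : Tendsto (fun ε : ℝ => ((⌊(Real.log ξ + -Real.log ε) / Real.log lam⌋₊ + 1 : ℕ) : ℝ) *
      (-Real.log ε)⁻¹) (𝓝[>] (0 : ℝ)) (𝓝 (1 / Real.log lam)) := by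
    have := hr.add hinv
    rw [add_zero] at this
    refine this.congr fun ε => ?_
    push_cast
    ring
  have lo := (hE.comp hn).mul hr
  have hi := (hE.comp hn1).mul hr'
  rw [mul_one_div] at lo hi
  have hpow : ∀ n : ℕ, ξ / lam ^ n = Real.exp (Real.log ξ - n * Real.log lam) := by
    intro n
    rw [Real.exp_sub, Real.exp_log hξ, mul_comm, Real.exp_mul, Real.exp_log h0,
      Real.rpow_natCast]
  refine tendsto_of_tendsto_of_tendsto_of_le_of_le' lo hi ?_ ?_
  · filter_upwards [hu.eventually_gt_atTop 0, ht.eventually_gt_atTop 0,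
      hn.eventually_gt_atTop 0, self_mem_nhdsWithin] with ε h1 h2 h3 h4
    have h4 : 0 < ε := h4
    simp only [Function.comp]
    have hfl := Nat.floor_le h2.le
    rw [le_div_iff₀ hL] at hfl
    rw [← mul_assoc, div_mul_cancel₀ _ (by positivity), ← div_eq_mul_inv]
    refine div_le_div_of_nonneg_right (aux_log_mono (aux_cov_anti X _ _ h4 ?_)) h1.le
    rw [hpow, ← Real.log_le_iff_le_exp h4]
    linarith
  · filter_upwards [hu.eventually_gt_atTop 0, self_mem_nhdsWithin] with ε h1 h4
    have h4 : 0 < ε := h4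
    simp only [Function.comp]
    have hfl := Nat.lt_floor_add_one ((Real.log ξ + -Real.log ε) / Real.log lam)
    rw [div_lt_iff₀ hL] at hfl
    rw [← mul_assoc, div_mul_cancel₀ _ (by positivity), ← div_eq_mul_inv]
    refine div_le_div_of_nonneg_right (aux_log_mono (aux_cov_anti X _ _ (by positivity) ?_)) h1.le
    rw [hpow, ← Real.le_log_iff_exp_le h4]
    push_cast
    linarith
end
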